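/- Let G be a countable abelian group of finite exponent. Suppose there exist an additive homomorphism s : (Fin 6 → G) →+ G (tuples with pointwise addition) that preserves ≠, and injective additive endomorphisms e₁, e₂ : G →+ G such that e₁(s(x,y,x,z,y,z)) = e₂(s(y,x,z,x,z,y)) for all x,y,z ∈ G. Then there exists m ≥ 1 such that G is bi-embeddable with ⨁_ℕ ZMod m, or G is bi-embeddable with (⨁_ℕ ZMod m) × ZMod (2*m). -/

import Mathlib

/-- A character into `ZMod m` separating a nonzero element from zero, for groups killed by `m`. -/
theorem exists_addMonoidHom_zmod_apply_ne_zero {H : Type*} [AddCommGroup H] {m : ℕ} (hm : 1 ≤ m)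
    (hH : ∀ x : H, m • x = 0) {a : H} (ha : a ≠ 0) : ∃ χ : H →+ ZMod m, χ a ≠ 0 := by
  obtain ⟨c, hc⟩ := CharacterModule.exists_character_apply_ne_zero_of_ne_zero ha
  let c' : H →+ AddCircle (1 : ℚ) := c
  have hm0 : (m : ℚ) ≠ 0 := by positivity
  let u : AddCircle (1 : ℚ) := ((1 / m : ℚ) : AddCircle (1 : ℚ))
  have hu : addOrderOf u = m := AddCircle.addOrderOf_period_div hm
  have hmem : ∀ x, c' x ∈ AddSubgroup.zmultiples u := by
    intro x
    have h1 : m • c' x = 0 := by rw [← map_nsmul, hH, map_zero]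
    obtain ⟨q, hq⟩ := QuotientAddGroup.mk_surjective (c' x)
    have h2 : ((m • q : ℚ) : AddCircle (1 : ℚ)) = 0 := by
      rw [← h1, ← hq]; rfl
    obtain ⟨k, hk⟩ := (AddCircle.coe_eq_zero_iff (1 : ℚ)).1 h2
    refine ⟨k, ?_⟩
    change k • u = _
    rw [← hq]
    change ((k • (1 / m : ℚ) : ℚ) : AddCircle (1 : ℚ)) = (q : AddCircle (1 : ℚ))
    congr 1
    simp only [zsmul_eq_mul, nsmul_eq_mul, mul_one] at hk ⊢
    rw [hk]; field_simp
  have hgen : ∀ y : AddSubgroup.zmultiples u,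
      y ∈ AddSubgroup.zmultiples (⟨u, AddSubgroup.mem_zmultiples u⟩ : AddSubgroup.zmultiples u) := by
    rintro ⟨_, k, rfl⟩
    exact ⟨k, rfl⟩
  let e : ZMod m ≃+ AddSubgroup.zmultiples u :=
    zmodAddEquivOfGenerator hgen ((Nat.card_zmultiples u).trans hu)
  refine ⟨e.symm.toAddMonoidHom.comp (c'.codRestrict _ hmem), fun h => hc ?_⟩
  exact congrArg Subtype.val ((AddEquiv.map_eq_zero_iff e.symm).1 h)

/-- In an abelian group of finite exponent, finitely generated subgroups are finite. -/
theorem AddSubgroup.FG.finite_of_exponent {H : Type*} [AddCommGroup H] {m : ℕ} (hm : 1 ≤ m)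
    (hH : ∀ x : H, m • x = 0) {K : AddSubgroup H} (hK : K.FG) : Finite K := by
  have : AddGroup.FG K := (AddGroup.fg_iff_addSubgroup_fg K).2 hK
  refine AddCommGroup.finite_of_fg_isAddTorsion K fun x => ?_
  exact isOfFinAddOrder_iff_nsmul_eq_zero.2 ⟨m, hm, Subtype.ext (hH x)⟩

/-- A finite subgroup is finitely generated. -/
theorem AddSubgroup.fg_of_finite_coe {H : Type*} [AddCommGroup H] (K : AddSubgroup H) [Finite K] :
    K.FG := (AddGroup.fg_iff_addSubgroup_fg K).1 inferInstance

/-- A countable abelian group killed by `m` embeds into a countable direct sum of copies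
of `ZMod m`. -/
theorem exists_injective_directSum_zmod {H : Type*} [AddCommGroup H] [Countable H] {m : ℕ}
    (hm : 1 ≤ m) (hH : ∀ x : H, m • x = 0) :
    ∃ f : H →+ DirectSum ℕ (fun _ => ZMod m), Function.Injective f := by
  classical
  obtain ⟨h, hh⟩ := exists_surjective_nat H
  let L : ℕ → AddSubgroup H := fun n => AddSubgroup.closure (h '' Set.Iio n)
  have hLmono : Monotone L := fun a b hab =>
    AddSubgroup.closure_mono (Set.image_mono (Set.Iio_subset_Iio hab))
  have hLfin : ∀ n, Finite (L n) := fun n =>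
    AddSubgroup.FG.finite_of_exponent hm hH
      ((AddSubgroup.fg_iff _).2 ⟨_, rfl, (Set.finite_Iio n).image h⟩)
  have hLex : ∀ x, ∃ n, x ∈ L n := by
    intro x
    obtain ⟨k, rfl⟩ := hh x
    exact ⟨k + 1, AddSubgroup.subset_closure ⟨k, Nat.lt_succ_self k, rfl⟩⟩
  have key : ∀ x : H, ∃ χ : H →+ ZMod m,
      (x ≠ 0 → χ x ≠ 0) ∧ ∀ n, x ∉ L n → ∀ y ∈ L n, χ y = 0 := by
    intro x
    by_cases hx : x = 0
    · exact ⟨0, fun h => (h hx).elim, fun _ _ _ _ => rfl⟩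
    have hpos : Nat.find (hLex x) ≠ 0 := by
      intro h0
      have := Nat.find_spec (hLex x)
      rw [h0] at this
      simp [L] at this
      exact hx this
    obtain ⟨r, hr⟩ := Nat.exists_eq_succ_of_ne_zero hpos
    have hxr : x ∉ L r := Nat.find_min (hLex x) (by omega)
    obtain ⟨χ, hχ⟩ := exists_addMonoidHom_zmod_apply_ne_zero (H := H ⧸ L r) hm
      (fun y => by
        obtain ⟨y, rfl⟩ := QuotientAddGroup.mk_surjective y
        rw [← QuotientAddGroup.mk_nsmul, hH]; rfl)
      (a := (x : H ⧸ L r)) (fun h => hxr ((QuotientAddGroup.eq_zero_iff x).1 h))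
    refine ⟨χ.comp (QuotientAddGroup.mk' (L r)), fun _ => hχ, fun n hn y hy => ?_⟩
    have hnr : n ≤ r := by
      by_contra hlt
      exact hn (hLmono (by omega : Nat.find (hLex x) ≤ n) (Nat.find_spec (hLex x)))
    have : (y : H ⧸ L r) = 0 := (QuotientAddGroup.eq_zero_iff y).2 (hLmono hnr hy)
    change χ (y : H ⧸ L r) = 0
    rw [this, map_zero]
  choose χ hχ1 hχ2 using key
  have hsupp : ∀ y, (Function.support fun x => χ x y).Finite := by
    intro y
    obtain ⟨n, hn⟩ := hLex y
    refine Set.Finite.subset (hLfin n : (L n : Set H).Finite) fun x hx => ?_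
    by_contra hxn
    exact hx (hχ2 x n hxn y hn)
  let F : H →+ (H →₀ ZMod m) :=
    { toFun := fun y => Finsupp.ofSupportFinite (fun x => χ x y) (hsupp y)
      map_zero' := by ext x; simp [Finsupp.ofSupportFinite]
      map_add' := fun a b => Finsupp.ext fun x => map_add (χ x) a b }
  have hF : Function.Injective F := by
    rw [injective_iff_map_eq_zero]
    intro y hy
    by_contra hy0
    exact hχ1 y hy0 (DFunLike.congr_fun hy y)
  obtain ⟨ι, hι⟩ := exists_injective_nat H
  refine ⟨(finsuppLEquivDirectSum ℤ (ZMod m) ℕ).toLinearMap.toAddMonoidHom.comp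
    ((Finsupp.mapDomain.addMonoidHom ι).comp F), ?_⟩
  exact (finsuppLEquivDirectSum ℤ (ZMod m) ℕ).injective.comp
    ((Finsupp.mapDomain_injective hι).comp hF)

/-- If independent elements of order `m` can be found over every finite subgroup, then a countable
direct sum of copies of `ZMod m` embeds independently of a given finite subgroup. -/
theorem exists_injective_directSum_zmod_prod {G A : Type*} [AddCommGroup G] [AddCommGroup A]
    [Finite A] {m : ℕ} {N : ℕ} (hN : 1 ≤ N) (hG : ∀ x : G, N • x = 0)
    (φ : A →+ G) (hφ : Function.Injective φ)
    (h : ∀ K : AddSubgroup G, Finite K →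
      ∃ x : G, m • x = 0 ∧ ∀ k : ℤ, k • x ∈ K → (m : ℤ) ∣ k) :
    ∃ g : DirectSum ℕ (fun _ => ZMod m) × A →+ G, Function.Injective g := by
  classical
  choose X hX0 hX using h
  have hfin : ∀ (K : AddSubgroup G) (x : G), Finite K →
      Finite (K ⊔ AddSubgroup.zmultiples x : AddSubgroup G) := fun K x hK =>
    AddSubgroup.FG.finite_of_exponent hN hG (K.fg_of_finite_coe.sup
      ((AddSubgroup.fg_iff _).2 ⟨{x}, AddSubgroup.zmultiples_eq_closure x |>.symm,
        Set.finite_singleton x⟩))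
  let step : {K : AddSubgroup G // Finite K} → {K : AddSubgroup G // Finite K} :=
    fun K => ⟨K.1 ⊔ AddSubgroup.zmultiples (X K.1 K.2), hfin _ _ K.2⟩
  have hr : Finite φ.range := Set.finite_range φ
  let K : ℕ → {K : AddSubgroup G // Finite K} := fun n => Nat.rec ⟨φ.range, hr⟩ (fun _ => step) n
  let x : ℕ → G := fun n => X (K n).1 (K n).2
  have hKmono : Monotone fun n => (K n).1 := monotone_nat_of_le_succ fun n => le_sup_left
  have hxK : ∀ n, x n ∈ (K (n + 1)).1 := fun n =>
    (le_sup_right : _ ≤ (K n).1 ⊔ AddSubgroup.zmultiples (x n)) (AddSubgroup.mem_zmultiples _)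
  have hφK : ∀ n a, φ a ∈ (K n).1 := fun n a => hKmono (Nat.zero_le n) ⟨a, rfl⟩
  let t : ℕ → ZMod m →+ G := fun n => ZMod.lift m ⟨zmultiplesHom G (x n), by
    simpa using hX0 (K n).1 (K n).2⟩
  have ht : ∀ n (k : ℤ), t n (k : ZMod m) = k • x n := fun n k => by simp [t]
  have htK : ∀ n a, t n a ∈ (K (n + 1)).1 := fun n a => by
    obtain ⟨k, rfl⟩ := ZMod.intCast_surjective a
    rw [ht]; exact zsmul_mem (hxK n) k
  have htinj : ∀ n a, t n a ∈ (K n).1 → a = 0 := fun n a ha => by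
    obtain ⟨k, rfl⟩ := ZMod.intCast_surjective a
    rw [ht] at ha
    exact (ZMod.intCast_zmod_eq_zero_iff_dvd k m).2 (hX _ _ k ha)
  let f : (ℕ →₀ ZMod m) →+ G := Finsupp.liftAddHom t
  have hf : ∀ (v : ℕ →₀ ZMod m) (n : ℕ), (∀ i, v i ≠ 0 → i < n) → f v ∈ (K n).1 := by
    intro v n hv
    change (v.sum fun i a => t i a) ∈ _
    refine sum_mem fun i hi => ?_
    exact hKmono (Nat.succ_le_of_lt (hv i (Finsupp.mem_support_iff.1 hi))) (htK i _)
  have hf0 : ∀ v a, f v + φ a = 0 → v = 0 := by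
    intro v a hva
    by_contra hv
    have hne : v.support.Nonempty := Finsupp.support_nonempty_iff.2 hv
    let n := v.support.max' hne
    have hn : v n ≠ 0 := Finsupp.mem_support_iff.1 (v.support.max'_mem hne)
    apply hn
    apply htinj n
    have h1 : f (Finsupp.single n (v n)) + f (v.erase n) = f v := by
      rw [← map_add, Finsupp.single_add_erase]
    have h2 : f (Finsupp.single n (v n)) = t n (v n) := by simp [f]
    have h3 : t n (v n) = -(f (v.erase n)) - φ a := by
      rw [← h2, eq_sub_iff_add_eq, eq_neg_iff_add_eq_zero, ← hva, ← h1]; abel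
    rw [h3]
    refine sub_mem (neg_mem (hf _ _ fun i hi => ?_)) (hφK n a)
    have hin : i ≠ n := by rintro rfl; simp at hi
    rw [Finsupp.erase_ne hin] at hi
    exact lt_of_le_of_ne (v.support.le_max' i (Finsupp.mem_support_iff.2 hi)) hin
  refine ⟨(f.comp (finsuppLEquivDirectSum ℤ (ZMod m) ℕ).symm.toLinearMap.toAddMonoidHom).coprod φ,
    ?_⟩
  rw [injective_iff_map_eq_zero]
  rintro ⟨v, a⟩ hva
  change f ((finsuppLEquivDirectSum ℤ (ZMod m) ℕ).symm v) + φ a = 0 at hva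
  have hv := hf0 _ _ hva
  rw [hv, map_zero, zero_add] at hva
  rw [Prod.mk_eq_zero]
  exact ⟨(LinearEquiv.map_eq_zero_iff _).1 hv, (injective_iff_map_eq_zero φ).1 hφ a hva⟩

open scoped Pointwise in
/-- If `d • G` is finite for `d = m` but for no `d = m / p`, then every finite subgroup admits an
independent element of order `m`. -/
theorem exists_independent_of_infinite_range {G : Type*} [AddCommGroup G] {m : ℕ} (hm : 1 ≤ m)
    (hfin : Finite (nsmulAddMonoidHom (α := G) m).range)
    (hinf : ∀ p : ℕ, p.Prime → p ∣ m → Infinite (nsmulAddMonoidHom (α := G) (m / p)).range)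
    (K : AddSubgroup G) (hK : Finite K) :
    ∃ x : G, m • x = 0 ∧ ∀ k : ℤ, k • x ∈ K → (m : ℤ) ∣ k := by
  classical
  let T : AddSubgroup G := (nsmulAddMonoidHom (α := G) m).ker
  have hT : T.FiniteIndex := AddSubgroup.finiteIndex_ker _
  let A : ℕ → AddSubgroup G := fun p => K.comap (nsmulAddMonoidHom (α := G) (m / p))
  have hx : ∃ x ∈ T, ∀ p ∈ m.primeFactors, (m / p) • x ∉ K := by
    by_contra! hcon
    have hcov : ⋃ p ∈ m.primeFactors, (0 : T) +ᵥ ((A p).addSubgroupOf T : Set T) = Set.univ := by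
      refine Set.eq_univ_of_forall fun y => ?_
      obtain ⟨p, hp, hpK⟩ := hcon y y.2
      simp only [zero_vadd]
      exact Set.mem_biUnion hp hpK
    obtain ⟨p, hp, hfi⟩ := AddSubgroup.exists_finiteIndex_of_leftCoset_cover hcov
    have h1 : (A p).relIndex T ≠ 0 := hfi.index_ne_zero
    have h2 : (A p).relIndex ⊤ ≠ 0 :=
      AddSubgroup.relIndex_ne_zero_trans h1 (by
        rw [AddSubgroup.relIndex_top_right]; exact hT.index_ne_zero)
    rw [AddSubgroup.relIndex_top_right, AddSubgroup.index_comap] at h2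
    have := hinf p (Nat.prime_of_mem_primeFactors hp) (Nat.dvd_of_mem_primeFactors hp)
    set R := (nsmulAddMonoidHom (α := G) (m / p)).range
    have hKR : Finite (K.addSubgroupOf R) :=
      Finite.of_injective (fun y => (⟨y.1.1, y.2⟩ : K)) fun a b hab =>
        Subtype.ext (Subtype.ext (congrArg (fun z : K => (z : G)) hab))
    have h3 := AddSubgroup.card_mul_index (K.addSubgroupOf R)
    rw [Nat.card_eq_zero_of_infinite (α := R)] at h3
    exact (mul_ne_zero Nat.card_pos.ne' h2) h3
  obtain ⟨x, hxT, hxp⟩ := hx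
  have hmx : m • x = 0 := hxT
  refine ⟨x, hmx, fun k hk => ?_⟩
  by_contra hmk
  let d := Int.gcd m k
  have hdm : d ∣ m := Int.natCast_dvd_natCast.1 (Int.gcd_dvd_left _ _)
  have hdx : d • x ∈ K := by
    have : (d : ℤ) • x = (Int.gcdB m k) • (k • x) := by
      rw [Int.gcd_eq_gcd_ab, add_smul, mul_comm, mul_smul, natCast_zsmul, hmx, smul_zero,
        zero_add, mul_comm, mul_smul]
    rw [← natCast_zsmul, this]
    exact zsmul_mem hk _
  obtain ⟨c, hc⟩ := hdm
  have hc1 : c ≠ 1 := by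
    rintro rfl
    apply hmk
    have : (d : ℤ) ∣ k := Int.gcd_dvd_right _ _
    rwa [hc, mul_one]
  obtain ⟨p, hp, e, rfl⟩ := Nat.exists_prime_and_dvd hc1
  have hpm : p ∣ m := ⟨d * e, by rw [hc]; ring⟩
  refine hxp p (Nat.mem_primeFactors.2 ⟨hp, hpm, by omega⟩) ?_
  have : m / p = e * d := by
    rw [Nat.div_eq_iff_eq_mul_left hp.pos hpm, hc]; ring
  rw [this, mul_smul]
  exact nsmul_mem hdx e

/-- A finite abelian group with a pseudo-Siggers polymorphism of `≠` has at most two elements. -/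
theorem card_le_two_of_pseudoSiggers {F : Type*} [AddCommGroup F] [Finite F]
    (s : (Fin 6 → F) →+ F) (hs : ∀ p : Fin 6 → F, (∀ i, p i ≠ 0) → s p ≠ 0)
    (e₁ e₂ : F →+ F) (he₁ : Function.Injective e₁) (he₂ : Function.Injective e₂)
    (hsig : ∀ x y z : F, e₁ (s ![x, y, x, z, y, z]) = e₂ (s ![y, x, z, x, z, y])) :
    Nat.card F ≤ 2 := by
  classical
  by_contra! hcard
  let c : Fin 6 → F →+ F := fun i => s.comp (AddMonoidHom.single (fun _ => F) i)
  have hc : ∀ p, s p = ∑ i, c i (p i) := fun p => by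
    conv_lhs => rw [← Finset.univ_sum_single p]
    rw [map_sum]; rfl
  obtain ⟨i, hi⟩ : ∃ i, Function.Injective (c i) := by
    by_contra! hno
    have : ∀ i, ∃ a, a ≠ 0 ∧ c i a = 0 := fun i => by
      by_contra! hcon
      refine hno i ((injective_iff_map_eq_zero _).2 fun a ha => ?_)
      by_contra ha0
      exact hcon a ha0 ha
    choose p hp0 hp using this
    exact hs p hp0 (by rw [hc]; exact Finset.sum_eq_zero fun i _ => hp i)
  have hsurj : Function.Surjective (c i) := Finite.surjective_of_injective hi
  have hrest : ∀ p : Fin 6 → F, (∀ j, p j ≠ 0) → ∑ j ∈ Finset.univ.erase i, c j (p j) = 0 := by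
    intro p hp
    by_contra hne
    obtain ⟨a, ha⟩ := hsurj (-∑ j ∈ Finset.univ.erase i, c j (p j))
    have ha0 : a ≠ 0 := by
      rintro rfl
      rw [map_zero, eq_comm, neg_eq_zero] at ha
      exact hne ha
    refine hs (Function.update p i a) (fun j => ?_) ?_
    · by_cases hj : j = i
      · subst hj; simpa
      · simpa [hj] using hp j
    · rw [hc, ← Finset.add_sum_erase _ _ (Finset.mem_univ i), Function.update_self, ha,
        neg_add_eq_zero]
      exact Finset.sum_congr rfl fun j hj => by
        rw [Function.update_of_ne (Finset.ne_of_mem_erase hj)]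
  have hthree : ∀ a : F, ∃ b, b ≠ 0 ∧ b ≠ a := by
    intro a
    by_contra! hcon
    have : Nat.card F ≤ ({0, a} : Finset F).card := by
      have := Fintype.ofFinite F
      rw [Nat.card_eq_fintype_card]
      exact Finset.card_le_card fun b _ => by
        by_cases hb : b = 0
        · simp [hb]
        · simp [hcon b hb]
    have := (this.trans Finset.card_le_two)
    omega
  have hconst : ∀ j, j ≠ i → ∀ a b : F, a ≠ 0 → b ≠ 0 → c j a = c j b := by
    intro j hj a b ha hb
    obtain ⟨w, hw, -⟩ := hthree 0
    have hja : j ∈ Finset.univ.erase i := by simp [hj]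
    have h1 : ∀ a, a ≠ 0 → c j a + ∑ l ∈ (Finset.univ.erase i).erase j, c l w = 0 := by
      intro a ha
      have := hrest (Function.update (fun _ => w) j a) (fun l => by
        by_cases hl : l = j
        · subst hl; simpa
        · simpa [hl] using hw)
      rw [← Finset.add_sum_erase _ _ hja, Function.update_self] at this
      rw [← this]
      congr 1
      exact Finset.sum_congr rfl fun l hl => by
        rw [Function.update_of_ne (Finset.ne_of_mem_erase hl)]
    exact add_right_cancel ((h1 a ha).trans (h1 b hb).symm)
  have hzero : ∀ j, j ≠ i → c j = 0 := by
    intro j hj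
    ext a
    by_cases ha : a = 0
    · simp [ha]
    obtain ⟨b, hb, hba⟩ := hthree a
    have h1 := hconst j hj a (a - b) ha (sub_ne_zero.2 hba.symm)
    rw [map_sub, hconst j hj b a hb ha, sub_self] at h1
    exact h1
  have hsi : ∀ p, s p = c i (p i) := fun p => by
    rw [hc]
    exact Finset.sum_eq_single i (fun j _ hj => by rw [hzero j hj]; rfl) (by simp)
  obtain ⟨w, hw, -⟩ := hthree 0
  have h1 := he₁.comp hi
  have h2 := he₂.comp hi
  have hA : ∀ a, e₁ (c i a) = 0 → a = 0 := fun a ha => h1 (by simpa using ha)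
  have hB : ∀ a, e₂ (c i a) = 0 → a = 0 := fun a ha => h2 (by simpa using ha)
  simp only [hsi] at hsig
  have hx := hsig w 0 0
  have hy := hsig 0 w 0
  have hz := hsig 0 0 w
  clear_value c
  fin_cases i <;> simp at hx hy hz hA hB <;> grind

/-- The image of multiplication by `m`, if finite, inherits a pseudo-Siggers polymorphism of `≠`
and hence has at most two elements. -/
theorem card_range_nsmul_le_two_of_pseudoSiggers {G : Type*} [AddCommGroup G]
    (s : (Fin 6 → G) →+ G)
    (hs : ∀ p q : Fin 6 → G, (∀ i, p i ≠ q i) → s p ≠ s q)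
    (e₁ e₂ : G →+ G)
    (he₁ : Function.Injective e₁) (he₂ : Function.Injective e₂)
    (hsig : ∀ x y z : G, e₁ (s ![x, y, x, z, y, z]) = e₂ (s ![y, x, z, x, z, y]))
    (m : ℕ) (hfin : Finite (nsmulAddMonoidHom (α := G) m).range) :
    Nat.card (nsmulAddMonoidHom (α := G) m).range ≤ 2 := by
  let R := (nsmulAddMonoidHom (α := G) m).range
  have hend : ∀ e : G →+ G, ∀ x ∈ R, e x ∈ R := by
    rintro e _ ⟨y, rfl⟩
    exact ⟨e y, (map_nsmul e m y).symm⟩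
  let r : (G →+ G) → (R →+ R) := fun e =>
    (e.comp R.subtype).codRestrict R fun x => hend e x x.2
  let ι : (Fin 6 → R) →+ (Fin 6 → G) := R.subtype.compLeft (Fin 6)
  have hsR : ∀ p, s (ι p) ∈ R := by
    intro p
    choose q hq using fun i => (p i).2
    refine ⟨s q, ?_⟩
    change m • s q = _
    rw [← map_nsmul]
    exact congrArg s (funext hq)
  have hr : ∀ e : G →+ G, Function.Injective e → Function.Injective (r e) := fun e he x y hxy =>
    Subtype.ext (he (congrArg Subtype.val hxy))
  refine card_le_two_of_pseudoSiggers ((s.comp ι).codRestrict R hsR) (fun p hp h0 => ?_)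
    (r e₁) (r e₂) (hr e₁ he₁) (hr e₂ he₂) fun x y z => Subtype.ext ?_
  · refine hs (ι p) 0 (fun i h => hp i (Subtype.ext h)) ?_
    rw [map_zero]
    exact congrArg Subtype.val h0
  · have hι : ∀ a b c d e f : R, ι ![a, b, c, d, e, f] = ![(a : G), b, c, d, e, f] := by
      intro a b c d e f
      funext i
      fin_cases i <;> rfl
    change e₁ (s (ι _)) = e₂ (s (ι _))
    rw [hι, hι]
    exact hsig x y z


/-- A countable abelian group of finite exponent such that `(G, ≠)` has a
pseudo-Siggers polymorphism is bi-embeddable with `⨁_ℕ ZMod m` or with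
`(⨁_ℕ ZMod m) × ZMod (2*m)` for some `m ≥ 1`. -/
theorem stmt_1 (G : Type) [AddCommGroup G] [Countable G]
    (hexp : ∃ k : ℕ, 1 ≤ k ∧ ∀ x : G, k • x = 0)
    (s : (Fin 6 → G) →+ G)
    (hs : ∀ p q : Fin 6 → G, (∀ i, p i ≠ q i) → s p ≠ s q)
    (e₁ e₂ : G →+ G)
    (he₁ : Function.Injective e₁) (he₂ : Function.Injective e₂)
    (hsig : ∀ x y z : G, e₁ (s ![x, y, x, z, y, z]) = e₂ (s ![y, x, z, x, z, y])) :
    ∃ m : ℕ, 1 ≤ m ∧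
      ((∃ (f : G →+ DirectSum ℕ (fun _ => ZMod m))
          (g : DirectSum ℕ (fun _ => ZMod m) →+ G),
          Function.Injective f ∧ Function.Injective g) ∨
       (∃ (f : G →+ (DirectSum ℕ (fun _ => ZMod m)) × ZMod (2 * m))
          (g : (DirectSum ℕ (fun _ => ZMod m)) × ZMod (2 * m) →+ G),
          Function.Injective f ∧ Function.Injective g)) := by
  classical
  obtain ⟨N, hN, hNG⟩ := hexp
  have hex : ∃ m : ℕ, 1 ≤ m ∧ Finite (nsmulAddMonoidHom (α := G) m).range := by
    refine ⟨N, hN, Set.Finite.subset (Set.finite_singleton 0) ?_⟩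
    rintro _ ⟨x, rfl⟩
    exact hNG x
  obtain ⟨m, ⟨hm, hfin⟩, hmin⟩ : ∃ m : ℕ, (1 ≤ m ∧ Finite (nsmulAddMonoidHom (α := G) m).range) ∧
      ∀ d < m, ¬ (1 ≤ d ∧ Finite (nsmulAddMonoidHom (α := G) d).range) :=
    ⟨Nat.find hex, Nat.find_spec hex, fun d hd => Nat.find_min hex hd⟩
  have hind := exists_independent_of_infinite_range hm hfin fun p hp hpm => by
    by_contra hcon
    rw [not_infinite_iff_finite] at hcon
    exact hmin (m / p) (Nat.div_lt_self hm hp.one_lt)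
      ⟨Nat.div_pos (Nat.le_of_dvd hm hpm) hp.pos, hcon⟩
  have hcard := card_range_nsmul_le_two_of_pseudoSiggers s hs e₁ e₂ he₁ he₂ hsig m hfin
  refine ⟨m, hm, ?_⟩
  by_cases hG : ∀ x : G, m • x = 0
  · left
    obtain ⟨f, hf⟩ := exists_injective_directSum_zmod hm hG
    obtain ⟨g, hg⟩ := exists_injective_directSum_zmod_prod hN hNG
      (⊥ : AddSubgroup G).subtype Subtype.val_injective hind
    exact ⟨f, g.comp (AddMonoidHom.inl _ _), hf, hg.comp fun x y h => congrArg Prod.fst h⟩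
  · right
    push Not at hG
    obtain ⟨a, ha⟩ := hG
    have hR : ∀ x : G, m • x = 0 ∨ m • x = m • a := by
      intro x
      by_contra! hx
      let R := (nsmulAddMonoidHom (α := G) m).range
      let T : Finset R := {0, ⟨m • x, x, rfl⟩, ⟨m • a, a, rfl⟩}
      have hT : T.card = 3 := Finset.card_eq_three.2 ⟨_, _, _,
        fun h => hx.1 (congrArg Subtype.val h).symm, fun h => ha (congrArg Subtype.val h).symm,
        fun h => hx.2 (congrArg Subtype.val h), rfl⟩
      have := Fintype.ofFinite R
      have h3 := Finset.card_le_univ T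
      rw [← Nat.card_eq_fintype_card] at h3
      have : Nat.card R ≤ 2 := hcard
      omega
    have h2a : (2 * m) • a = 0 := by
      rcases hR (2 • a) with h | h
      · rw [mul_comm, mul_smul, h]
      · rw [smul_comm, two_smul, add_eq_left] at h
        exact (ha h).elim
    have h2G : ∀ x : G, (2 * m) • x = 0 := by
      intro x
      rw [mul_smul]
      rcases hR x with h | h
      · rw [h, smul_zero]
      · rw [h, ← mul_smul, h2a]
    have : Countable (G ⧸ AddSubgroup.zmultiples (m • a)) :=
      (QuotientAddGroup.mk_surjective).countable
    obtain ⟨f, hf⟩ := exists_injective_directSum_zmod (H := G ⧸ AddSubgroup.zmultiples (m • a)) hm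
      (fun y => by
        obtain ⟨y, rfl⟩ := QuotientAddGroup.mk_surjective y
        rw [← QuotientAddGroup.mk_nsmul, QuotientAddGroup.eq_zero_iff]
        rcases hR y with h | h
        · rw [h]; exact zero_mem _
        · rw [h]; exact AddSubgroup.mem_zmultiples _)
    obtain ⟨χ, hχ⟩ := exists_addMonoidHom_zmod_apply_ne_zero (by omega : 1 ≤ 2 * m) h2G ha
    obtain ⟨x, hx, hxk⟩ := hind (AddSubgroup.zmultiples a)
      (AddSubgroup.FG.finite_of_exponent hN hNG ((AddSubgroup.fg_iff _).2
        ⟨{a}, (AddSubgroup.zmultiples_eq_closure a).symm, Set.finite_singleton a⟩))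
    let φ : ZMod (2 * m) →+ G := ZMod.lift (2 * m) ⟨zmultiplesHom G (a + x), by
      rw [zmultiplesHom_apply, natCast_zsmul]
      exact h2G (a + x)⟩
    have hφ : Function.Injective φ := by
      refine (ZMod.lift_injective _).2 fun k hk => ?_
      have hk' : k • a + k • x = 0 := by simpa using hk
      obtain ⟨j, rfl⟩ := hxk k (by
        rw [eq_neg_of_add_eq_zero_right hk']
        exact neg_mem (zsmul_mem (AddSubgroup.mem_zmultiples a) k))
      have hjx : ((m : ℤ) * j) • x = 0 := by
        rw [mul_comm, mul_smul, natCast_zsmul, hx, smul_zero]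
      rw [hjx, add_zero, mul_comm, mul_smul, natCast_zsmul] at hk'
      rw [ZMod.intCast_zmod_eq_zero_iff_dvd]
      rcases Int.even_or_odd' j with ⟨i, rfl | rfl⟩
      · exact ⟨i, by push_cast; ring⟩
      · exfalso
        apply ha
        rw [add_smul, one_smul, mul_comm, mul_smul] at hk'
        have : (2 : ℤ) • m • a = 0 := by
          rw [← h2a, mul_smul]; exact natCast_zsmul _ 2
        rwa [this, smul_zero, zero_add] at hk'
    have : NeZero (2 * m) := ⟨by omega⟩
    obtain ⟨g, hg⟩ := exists_injective_directSum_zmod_prod hN hNG φ hφ hind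
    refine ⟨(f.comp (QuotientAddGroup.mk' _)).prod χ, g, ?_, hg⟩
    rw [injective_iff_map_eq_zero]
    intro y hy
    obtain ⟨hy1, hy2⟩ := Prod.mk_eq_zero.1 hy
    have h0 : ((y : G) : G ⧸ AddSubgroup.zmultiples (m • a)) = 0 :=
      (injective_iff_map_eq_zero f).1 hf _ hy1
    obtain ⟨k, rfl⟩ := (QuotientAddGroup.eq_zero_iff y).1 h0
    change k • m • a = 0
    have hka : k • m • a = m • (k • a) := smul_comm _ _ _
    rcases hR (k • a) with h | h
    · rw [hka, h]
    · refine (hχ ?_).elim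
      rw [← h, ← hka]; exact hy2
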